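/- Space consumption for λS: if M is a well-typed GTLC term, M : Γ ⊢G A, then there exists a constant k such that for every term M' with 𝒞[M] ⟶S* M' (multi-step reduction in the space-efficient calculus SC(λS) starting from the cast-inserted compilation of M), real-size(M') ≤ k · ideal-size(M'). -/

import Mathlib

/-!
Along a reduction sequence two quantities stay bounded.

*Heights of coercions.* Composition satisfies `height (c ⨟ d) ≤ max (height c) (height d)`
(`heightS_comp`), and every other rule only passes to components of coercions already present.
Since the size of a coercion is at most exponential in its height (`sizeS_add_le`), all coercions
in all reducts have size at most a constant `s` depending only on the compiled term.

*Lengths of chains of adjacent casts.* Compilation never nests two casts directly. A value carries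
at most one cast, so substituting it under a cast gives a chain of two, and such a chain no longer
sits on a variable, so later substitutions cannot lengthen it. Counting a variable as one cast
(`chain`) turns this into the statement that chains of length at most `2` are stable under
substitution of values. At evaluated positions one more cast may appear, because a redex beneath a
single cast may contract to a term whose root chain has length `2`; but a step beneath a cast is
possible only if the term there is not itself a cast, so chains never exceed `3`. This is the
invariant `Good h 3`, preserved by `Good.step`.

With at most three casts of size at most `s` above each non-cast node, the real size is at most
`1 + 3 * s` times the ideal size (`realSize_add_le`).
-/

set_option maxHeartbeats 1000000

abbrev Label : Type := ℕ

inductive BaseTy : Type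
  | nat | bool | int | unit | bot
deriving DecidableEq

inductive GType : Type
  | base (b : BaseTy)
  | unk
  | arr (A B : GType)
  | prod (A B : GType)
  | sum (A B : GType)
deriving DecidableEq

inductive Atomic : GType → Prop
  | base (b : BaseTy) : Atomic (.base b)
  | unk : Atomic .unk

inductive TyPrec : GType → GType → Prop
  | unk (A : GType) : TyPrec .unk A
  | base (b : BaseTy) : TyPrec (.base b) (.base b)
  | arr : TyPrec A A' → TyPrec B B' → TyPrec (.arr A B) (.arr A' B')
  | prod : TyPrec A A' → TyPrec B B' → TyPrec (.prod A B) (.prod A' B')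
  | sum : TyPrec A A' → TyPrec B B' → TyPrec (.sum A B) (.sum A' B')

inductive CtxPrec : List GType → List GType → Prop
  | nil : CtxPrec [] []
  | cons : TyPrec A A' → CtxPrec Γ Γ' → CtxPrec (A :: Γ) (A' :: Γ')

inductive Consis : GType → GType → Type
  | unkR (A : GType) : Consis A .unk
  | unkL (B : GType) : Consis .unk B
  | base (b : BaseTy) : Consis (.base b) (.base b)
  | arr : Consis A' A → Consis B B' → Consis (.arr A B) (.arr A' B')
  | prod : Consis A A' → Consis B B' → Consis (.prod A B) (.prod A' B')
  | sum : Consis A A' → Consis B B' → Consis (.sum A B) (.sum A' B')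

def Consis.join : ∀ {A B : GType}, Consis A B → GType
  | _, _, .unkR A => A
  | _, _, .unkL B => B
  | _, _, .base b => .base b
  | _, _, .arr c d => .arr c.join d.join
  | _, _, .prod c d => .prod c.join d.join
  | _, _, .sum c d => .sum c.join d.join

def Consis.refl : (A : GType) → Consis A A
  | .unk => .unkR .unk
  | .base b => .base b
  | .arr A B => .arr (Consis.refl A) (Consis.refl B)
  | .prod A B => .prod (Consis.refl A) (Consis.refl B)
  | .sum A B => .sum (Consis.refl A) (Consis.refl B)

def Consis.symm : ∀ {A B : GType}, Consis A B → Consis B A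
  | _, _, .unkR A => .unkL A
  | _, _, .unkL B => .unkR B
  | _, _, .base b => .base b
  | _, _, .arr c d => .arr c.symm d.symm
  | _, _, .prod c d => .prod c.symm d.symm
  | _, _, .sum c d => .sum c.symm d.symm

mutual
def Consis.joinL : ∀ {A B : GType}, (c : Consis A B) → Consis A c.join
  | _, _, .unkR A => Consis.refl A
  | _, _, .unkL B => .unkL B
  | _, _, .base b => .base b
  | _, _, .arr c d => .arr (Consis.joinR c).symm (Consis.joinL d)
  | _, _, .prod c d => .prod (Consis.joinL c) (Consis.joinL d)
  | _, _, .sum c d => .sum (Consis.joinL c) (Consis.joinL d)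

def Consis.joinR : ∀ {A B : GType}, (c : Consis A B) → Consis B c.join
  | _, _, .unkR A => .unkL A
  | _, _, .unkL B => Consis.refl B
  | _, _, .base b => .base b
  | _, _, .arr c d => .arr (Consis.joinL c).symm (Consis.joinR d)
  | _, _, .prod c d => .prod (Consis.joinR c) (Consis.joinR d)
  | _, _, .sum c d => .sum (Consis.joinR c) (Consis.joinR d)
end

inductive GVar : List GType → GType → Type
  | z : GVar (A :: Γ) A
  | s : GVar Γ A → GVar (B :: Γ) A

def GVar.idx : ∀ {Γ A}, GVar Γ A → ℕ
  | _, _, .z => 0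
  | _, _, .s x => x.idx + 1

inductive Prim : GType → Type
  | base (b : BaseTy) : Prim (.base b)
  | fn (b : BaseTy) {A : GType} : Prim A → Prim (.arr (.base b) A)

def BaseTy.rep : BaseTy → Type
  | .nat => ℕ
  | .bool => Bool
  | .int => ℤ
  | .unit => Unit
  | .bot => Empty

def Prim.rep : ∀ {A : GType}, Prim A → Type
  | _, .base b => b.rep
  | _, .fn b p => b.rep → p.rep
inductive MatchArr : GType → GType → GType → Type
  | arr (A B : GType) : MatchArr (.arr A B) A B
  | unk : MatchArr .unk .unk .unk

inductive MatchProd : GType → GType → GType → Type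
  | prod (A B : GType) : MatchProd (.prod A B) A B
  | unk : MatchProd .unk .unk .unk

inductive MatchSum : GType → GType → GType → Type
  | sum (A B : GType) : MatchSum (.sum A B) A B
  | unk : MatchSum .unk .unk .unk

def MatchArr.consis : ∀ {A A₁ A₂ : GType}, MatchArr A A₁ A₂ → Consis A (.arr A₁ A₂)
  | _, _, _, .arr A B => Consis.refl (.arr A B)
  | _, _, _, .unk => .unkL _

def MatchProd.consis : ∀ {A A₁ A₂ : GType}, MatchProd A A₁ A₂ → Consis A (.prod A₁ A₂)
  | _, _, _, .prod A B => Consis.refl (.prod A B)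
  | _, _, _, .unk => .unkL _

def MatchSum.consis : ∀ {A A₁ A₂ : GType}, MatchSum A A₁ A₂ → Consis A (.sum A₁ A₂)
  | _, _, _, .sum A B => Consis.refl (.sum A B)
  | _, _, _, .unk => .unkL _

inductive GTerm : List GType → GType → Type
  | const {Γ : List GType} {A : GType} (p : Prim A) (k : p.rep) : GTerm Γ A
  | var {Γ A} (x : GVar Γ A) : GTerm Γ A
  | lam {Γ B} (A : GType) (N : GTerm (A :: Γ) B) : GTerm Γ (.arr A B)
  | app {Γ A A₁ A₂ B} (L : GTerm Γ A) (M : GTerm Γ B) (ℓ : Label)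
      (m : MatchArr A A₁ A₂) (cn : Consis A₁ B) : GTerm Γ A₂
  | ite {Γ A B C} (L : GTerm Γ A) (M : GTerm Γ B) (N : GTerm Γ C) (ℓ : Label)
      (cb : Consis A (.base .bool)) (cn : Consis B C) : GTerm Γ cn.join
  | cons {Γ A B} (M : GTerm Γ A) (N : GTerm Γ B) : GTerm Γ (.prod A B)
  | fst {Γ A A₁ A₂} (M : GTerm Γ A) (ℓ : Label) (m : MatchProd A A₁ A₂) : GTerm Γ A₁
  | snd {Γ A A₁ A₂} (M : GTerm Γ A) (ℓ : Label) (m : MatchProd A A₁ A₂) : GTerm Γ A₂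
  | inl {Γ A} (B : GType) (M : GTerm Γ A) : GTerm Γ (.sum A B)
  | inr {Γ B} (A : GType) (M : GTerm Γ B) : GTerm Γ (.sum A B)
  | case {Γ A B₁ B₂ C₁ C₂} (L : GTerm Γ A) (M : GTerm (B₁ :: Γ) B₂) (N : GTerm (C₁ :: Γ) C₂)
      (ℓ : Label) (ca : Consis A (.sum B₁ C₁)) (bc : Consis B₂ C₂) : GTerm Γ bc.join

inductive GPrec : ∀ {Γ Γ' : List GType} {A A' : GType}, GTerm Γ A → GTerm Γ' A' → Prop
  | const {Γ Γ' : List GType} {A : GType} (p : Prim A) (k : p.rep) :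
      GPrec (Γ := Γ) (Γ' := Γ') (.const p k) (.const p k)
  | var {Γ Γ' A A'} (x : GVar Γ A) (x' : GVar Γ' A') :
      x.idx = x'.idx → GPrec (.var x) (.var x')
  | lam {Γ Γ' A A' B B'} {N : GTerm (A :: Γ) B} {N' : GTerm (A' :: Γ') B'} :
      TyPrec A A' → GPrec N N' → GPrec (.lam A N) (.lam A' N')
  | app {Γ Γ' A A' A₁ A₂ A₁' A₂' B B' ℓ ℓ'}
      {L : GTerm Γ A} {L' : GTerm Γ' A'} {M : GTerm Γ B} {M' : GTerm Γ' B'}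
      {m : MatchArr A A₁ A₂} {m' : MatchArr A' A₁' A₂'} {cn : Consis A₁ B} {cn' : Consis A₁' B'} :
      GPrec L L' → GPrec M M' → GPrec (.app L M ℓ m cn) (.app L' M' ℓ' m' cn')
  | ite {Γ Γ' A A' B B' C C' ℓ ℓ'}
      {L : GTerm Γ A} {L' : GTerm Γ' A'} {M : GTerm Γ B} {M' : GTerm Γ' B'}
      {N : GTerm Γ C} {N' : GTerm Γ' C'}
      {cb : Consis A (.base .bool)} {cb' : Consis A' (.base .bool)}
      {cn : Consis B C} {cn' : Consis B' C'} :
      GPrec L L' → GPrec M M' → GPrec N N' →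
      GPrec (.ite L M N ℓ cb cn) (.ite L' M' N' ℓ' cb' cn')
  | cons {Γ Γ' A A' B B'} {M : GTerm Γ A} {M' : GTerm Γ' A'} {N : GTerm Γ B} {N' : GTerm Γ' B'} :
      GPrec M M' → GPrec N N' → GPrec (.cons M N) (.cons M' N')
  | fst {Γ Γ' A A' A₁ A₂ A₁' A₂' ℓ ℓ'} {M : GTerm Γ A} {M' : GTerm Γ' A'}
      {m : MatchProd A A₁ A₂} {m' : MatchProd A' A₁' A₂'} :
      GPrec M M' → GPrec (.fst M ℓ m) (.fst M' ℓ' m')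
  | snd {Γ Γ' A A' A₁ A₂ A₁' A₂' ℓ ℓ'} {M : GTerm Γ A} {M' : GTerm Γ' A'}
      {m : MatchProd A A₁ A₂} {m' : MatchProd A' A₁' A₂'} :
      GPrec M M' → GPrec (.snd M ℓ m) (.snd M' ℓ' m')
  | inl {Γ Γ' A A' B B'} {M : GTerm Γ A} {M' : GTerm Γ' A'} :
      TyPrec B B' → GPrec M M' → GPrec (.inl B M) (.inl B' M')
  | inr {Γ Γ' A A' B B'} {M : GTerm Γ B} {M' : GTerm Γ' B'} :
      TyPrec A A' → GPrec M M' → GPrec (.inr A M) (.inr A' M')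
  | case {Γ Γ' A A' B₁ B₂ C₁ C₂ B₁' B₂' C₁' C₂' ℓ ℓ'}
      {L : GTerm Γ A} {L' : GTerm Γ' A'}
      {M : GTerm (B₁ :: Γ) B₂} {M' : GTerm (B₁' :: Γ') B₂'}
      {N : GTerm (C₁ :: Γ) C₂} {N' : GTerm (C₁' :: Γ') C₂'}
      {ca : Consis A (.sum B₁ C₁)} {ca' : Consis A' (.sum B₁' C₁')}
      {bc : Consis B₂ C₂} {bc' : Consis B₂' C₂'} :
      TyPrec B₁ B₁' → TyPrec C₁ C₁' → GPrec L L' → GPrec M M' → GPrec N N' →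
      GPrec (.case L M N ℓ ca bc) (.case L' M' N' ℓ' ca' bc')

/-- Ground types. -/
inductive Ground : GType → Prop
  | base (b : BaseTy) : Ground (.base b)
  | arr : Ground (.arr .unk .unk)
  | prod : Ground (.prod .unk .unk)
  | sum : Ground (.sum .unk .unk)

mutual
/-- λS top-level coercions. -/
inductive SCo : GType → GType → Type
  | id : SCo .unk .unk
  | proj (H : GType) (g : Ground H) (ℓ : Label) {B : GType} (i : ICo H B) : SCo .unk B
  | mid {A B : GType} (i : ICo A B) : SCo A B

/-- λS intermediate coercions. -/
inductive ICo : GType → GType → Type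
  | inj {A G : GType} (g : GCo A G) (gr : Ground G) : ICo A .unk
  | gnd {A B : GType} (g : GCo A B) : ICo A B
  | fail (A B : GType) (ℓ : Label) : ICo A B

/-- λS ground coercions. -/
inductive GCo : GType → GType → Type
  | id (b : BaseTy) : GCo (.base b) (.base b)
  | arr {A B C D : GType} (c : SCo C A) (d : SCo B D) : GCo (.arr A B) (.arr C D)
  | prod {A B C D : GType} (c : SCo A C) (d : SCo B D) : GCo (.prod A B) (.prod C D)
  | sum {A B C D : GType} (c : SCo A C) (d : SCo B D) : GCo (.sum A B) (.sum C D)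
end

mutual
/-- Height of a λS top-level coercion. -/
def heightS : ∀ {A B : GType}, SCo A B → ℕ
  | _, _, .id => 0
  | _, _, .proj _ _ _ i => heightI i
  | _, _, .mid i => heightI i
/-- Height of a λS intermediate coercion. -/
def heightI : ∀ {A B : GType}, ICo A B → ℕ
  | _, _, .inj g _ => heightG g
  | _, _, .gnd g => heightG g
  | _, _, .fail _ _ _ => 0
/-- Height of a λS ground coercion. -/
def heightG : ∀ {A B : GType}, GCo A B → ℕ
  | _, _, .id _ => 0
  | _, _, .arr c d => 1 + max (heightS c) (heightS d)
  | _, _, .prod c d => 1 + max (heightS c) (heightS d)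
  | _, _, .sum c d => 1 + max (heightS c) (heightS d)
end

mutual
/-- Size of a λS top-level coercion. -/
def sizeS : ∀ {A B : GType}, SCo A B → ℕ
  | _, _, .id => 0
  | _, _, .proj _ _ _ i => 2 + sizeI i
  | _, _, .mid i => sizeI i
/-- Size of a λS intermediate coercion. -/
def sizeI : ∀ {A B : GType}, ICo A B → ℕ
  | _, _, .inj g _ => 2 + sizeG g
  | _, _, .gnd g => sizeG g
  | _, _, .fail _ _ _ => 0
/-- Size of a λS ground coercion. -/
def sizeG : ∀ {A B : GType}, GCo A B → ℕ
  | _, _, .id _ => 0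
  | _, _, .arr c d => 1 + sizeS c + sizeS d
  | _, _, .prod c d => 1 + sizeS c + sizeS d
  | _, _, .sum c d => 1 + sizeS c + sizeS d
end

mutual
def wS : ∀ {A B : GType}, SCo A B → ℕ
  | _, _, .id => 1
  | _, _, .proj _ _ _ i => 1 + wI i
  | _, _, .mid i => 1 + wI i
def wI : ∀ {A B : GType}, ICo A B → ℕ
  | _, _, .inj g _ => 1 + wG g
  | _, _, .gnd g => 1 + wG g
  | _, _, .fail _ _ _ => 1
def wG : ∀ {A B : GType}, GCo A B → ℕ
  | _, _, .id _ => 1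
  | _, _, .arr c d => 1 + wS c + wS d
  | _, _, .prod c d => 1 + wS c + wS d
  | _, _, .sum c d => 1 + wS c + wS d
end

mutual
/-- Composition of λS top-level coercions. -/
def comp : ∀ {A B C : GType}, SCo A B → SCo B C → SCo A C
  | _, _, _, .id, d => d
  | _, _, _, .proj H g ℓ i, d => .proj H g ℓ (compI i d)
  | _, _, _, .mid i, d => .mid (compI i d)
termination_by _ _ _ c d => wS c + wS d
decreasing_by all_goals (simp only [wS, wI, wG]; omega)

/-- Composition of an intermediate coercion with a top-level coercion. -/
def compI : ∀ {A B C : GType}, ICo A B → SCo B C → ICo A C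
  | _, _, _, .fail A B ℓ, _ => .fail A _ ℓ
  | _, _, _, .inj g gr, .id => .inj g gr
  | _, _, _, .inj g gr, .proj _ hr ℓ i => compInjProj g gr hr ℓ i
  | _, _, _, .inj _ _, .mid i' =>
      match i' with
      | .fail _ _ ℓ => .fail _ _ ℓ
      | .inj g' _ => nomatch g'
      | .gnd g' => nomatch g'
  | _, _, _, .gnd g, .mid i' => compGI g i'
  | _, _, _, .gnd g, .id => nomatch g
  | _, _, _, .gnd g, .proj _ _ _ _ => nomatch g
termination_by _ _ _ i d => wI i + wS d
decreasing_by all_goals (simp only [wS, wI, wG]; omega)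

/-- Composition of an injection `(g ; G!)` with a projection `(H?ℓ ; i)`:
if the ground types agree the coercions collapse, otherwise the composite fails. -/
def compInjProj : ∀ {A G H C : GType}, GCo A G → Ground G → Ground H → Label →
    ICo H C → ICo A C
  | _, G, H, _, g, _, _, ℓ, i =>
      if h : G = H then compGI (h ▸ g) i else .fail _ _ ℓ
termination_by A G H C g _ _ _ i => wG g + wI i + 1
decreasing_by subst h; simp only []; omega

/-- Composition of a ground coercion with an intermediate coercion. -/
def compGI : ∀ {A B C : GType}, GCo A B → ICo B C → ICo A C
  | _, _, _, g, .inj h hr => .inj (compG g h) hr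
  | _, _, _, g, .gnd h => .gnd (compG g h)
  | _, _, _, _, .fail _ _ ℓ => .fail _ _ ℓ
termination_by _ _ _ g i => wG g + wI i
decreasing_by all_goals (simp only [wS, wI, wG]; omega)

/-- Composition of ground coercions. -/
def compG : ∀ {A B C : GType}, GCo A B → GCo B C → GCo A C
  | _, _, _, .id b, .id _ => .id b
  | _, _, _, .arr c₁ d₁, .arr c₂ d₂ => .arr (comp c₂ c₁) (comp d₁ d₂)
  | _, _, _, .prod c₁ d₁, .prod c₂ d₂ => .prod (comp c₁ c₂) (comp d₁ d₂)
  | _, _, _, .sum c₁ d₁, .sum c₂ d₂ => .sum (comp c₁ c₂) (comp d₁ d₂)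
termination_by _ _ _ g h => wG g + wG h
decreasing_by all_goals (simp only [wS, wI, wG]; omega)
end

mutual
/-- The canonical λS coercion from `A` to `?` with blame label `ℓ`. -/
def coerceTo : (A : GType) → Label → SCo A .unk
  | .unk, _ => .id
  | .base b, _ => .mid (.inj (.id b) (.base b))
  | .arr A B, ℓ => .mid (.inj (.arr (coerceFrom A ℓ) (coerceTo B ℓ)) .arr)
  | .prod A B, ℓ => .mid (.inj (.prod (coerceTo A ℓ) (coerceTo B ℓ)) .prod)
  | .sum A B, ℓ => .mid (.inj (.sum (coerceTo A ℓ) (coerceTo B ℓ)) .sum)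

/-- The canonical λS coercion from `?` to `A` with blame label `ℓ`. -/
def coerceFrom : (A : GType) → Label → SCo .unk A
  | .unk, _ => .id
  | .base b, ℓ => .proj (.base b) (.base b) ℓ (.gnd (.id b))
  | .arr A B, ℓ => .proj (.arr .unk .unk) .arr ℓ (.gnd (.arr (coerceTo A ℓ) (coerceFrom B ℓ)))
  | .prod A B, ℓ => .proj (.prod .unk .unk) .prod ℓ (.gnd (.prod (coerceFrom A ℓ) (coerceFrom B ℓ)))
  | .sum A B, ℓ => .proj (.sum .unk .unk) .sum ℓ (.gnd (.sum (coerceFrom A ℓ) (coerceFrom B ℓ)))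
end

/-- The λS coercion constructor `(A ⇒ B)ℓ`, on a consistency proof. -/
def coerceS : ∀ {A B : GType}, Consis A B → Label → SCo A B
  | _, _, .unkR A, ℓ => coerceTo A ℓ
  | _, _, .unkL B, ℓ => coerceFrom B ℓ
  | _, _, .base b, _ => .mid (.gnd (.id b))
  | _, _, .arr c d, ℓ => .mid (.gnd (.arr (coerceS c ℓ) (coerceS d ℓ)))
  | _, _, .prod c d, ℓ => .mid (.gnd (.prod (coerceS c ℓ) (coerceS d ℓ)))
  | _, _, .sum c d, ℓ => .mid (.gnd (.sum (coerceS c ℓ) (coerceS d ℓ)))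

/-- Renamings. -/
def Ren (Γ Δ : List GType) : Type := ∀ A : GType, GVar Γ A → GVar Δ A

def Ren.ext {Γ Δ : List GType} (ρ : Ren Γ Δ) (B : GType) : Ren (B :: Γ) (B :: Δ) :=
  fun _ x =>
    match x with
    | .z => .z
    | .s y => .s (ρ _ y)

def shiftRen {Γ : List GType} (B : GType) : Ren Γ (B :: Γ) := fun _ x => .s x

/-- Intrinsically-typed terms of the Parameterized Cast Calculus `CC(⇒)`,
over an arbitrary family `Cast` of cast representations. -/
inductive Tm (Cast : GType → GType → Type) : List GType → GType → Type
  | const {Γ : List GType} {A : GType} (p : Prim A) (k : p.rep) : Tm Cast Γ A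
  | var {Γ A} (x : GVar Γ A) : Tm Cast Γ A
  | lam {Γ A B} (N : Tm Cast (A :: Γ) B) : Tm Cast Γ (.arr A B)
  | app {Γ A B} (L : Tm Cast Γ (.arr A B)) (M : Tm Cast Γ A) : Tm Cast Γ B
  | ite {Γ A} (L : Tm Cast Γ (.base .bool)) (M N : Tm Cast Γ A) : Tm Cast Γ A
  | cons {Γ A B} (M : Tm Cast Γ A) (N : Tm Cast Γ B) : Tm Cast Γ (.prod A B)
  | fst {Γ A B} (M : Tm Cast Γ (.prod A B)) : Tm Cast Γ A
  | snd {Γ A B} (M : Tm Cast Γ (.prod A B)) : Tm Cast Γ B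
  | inl {Γ A} (B : GType) (M : Tm Cast Γ A) : Tm Cast Γ (.sum A B)
  | inr {Γ B} (A : GType) (M : Tm Cast Γ B) : Tm Cast Γ (.sum A B)
  | case {Γ A B C} (L : Tm Cast Γ (.sum A B))
      (M : Tm Cast Γ (.arr A C)) (N : Tm Cast Γ (.arr B C)) : Tm Cast Γ C
  | cast {Γ A B} (M : Tm Cast Γ A) (c : Cast A B) : Tm Cast Γ B
  | blame {Γ} (A : GType) (ℓ : Label) : Tm Cast Γ A

def Tm.rename {Cast} : ∀ {Γ Δ : List GType} {A : GType}, Ren Γ Δ → Tm Cast Γ A → Tm Cast Δ A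
  | _, _, _, _, .const p k => .const p k
  | _, _, _, ρ, .var x => .var (ρ _ x)
  | _, _, _, ρ, .lam N => .lam (N.rename (ρ.ext _))
  | _, _, _, ρ, .app L M => .app (L.rename ρ) (M.rename ρ)
  | _, _, _, ρ, .ite L M N => .ite (L.rename ρ) (M.rename ρ) (N.rename ρ)
  | _, _, _, ρ, .cons M N => .cons (M.rename ρ) (N.rename ρ)
  | _, _, _, ρ, .fst M => .fst (M.rename ρ)
  | _, _, _, ρ, .snd M => .snd (M.rename ρ)
  | _, _, _, ρ, .inl B M => .inl B (M.rename ρ)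
  | _, _, _, ρ, .inr A M => .inr A (M.rename ρ)
  | _, _, _, ρ, .case L M N => .case (L.rename ρ) (M.rename ρ) (N.rename ρ)
  | _, _, _, ρ, .cast M c => .cast (M.rename ρ) c
  | _, _, _, _, .blame A ℓ => .blame A ℓ

/-- Substitutions. -/
def Subst (Cast : GType → GType → Type) (Γ Δ : List GType) : Type :=
  ∀ A : GType, GVar Γ A → Tm Cast Δ A

def Subst.exts {Cast} {Γ Δ : List GType} (σ : Subst Cast Γ Δ) (B : GType) :
    Subst Cast (B :: Γ) (B :: Δ) :=
  fun _ x =>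
    match x with
    | .z => .var .z
    | .s y => (σ _ y).rename (shiftRen B)

def Tm.subst {Cast} : ∀ {Γ Δ : List GType} {A : GType}, Subst Cast Γ Δ → Tm Cast Γ A → Tm Cast Δ A
  | _, _, _, _, .const p k => .const p k
  | _, _, _, σ, .var x => σ _ x
  | _, _, _, σ, .lam N => .lam (N.subst (σ.exts _))
  | _, _, _, σ, .app L M => .app (L.subst σ) (M.subst σ)
  | _, _, _, σ, .ite L M N => .ite (L.subst σ) (M.subst σ) (N.subst σ)
  | _, _, _, σ, .cons M N => .cons (M.subst σ) (N.subst σ)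
  | _, _, _, σ, .fst M => .fst (M.subst σ)
  | _, _, _, σ, .snd M => .snd (M.subst σ)
  | _, _, _, σ, .inl B M => .inl B (M.subst σ)
  | _, _, _, σ, .inr A M => .inr A (M.subst σ)
  | _, _, _, σ, .case L M N => .case (L.subst σ) (M.subst σ) (N.subst σ)
  | _, _, _, σ, .cast M c => .cast (M.subst σ) c
  | _, _, _, _, .blame A ℓ => .blame A ℓ

def substZero {Cast} {Γ : List GType} {B : GType} (N : Tm Cast Γ B) : Subst Cast (B :: Γ) Γ :=
  fun _ x =>
    match x with
    | .z => N
    | .s y => .var y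

/-- `M [ N ]`. -/
def Tm.subst1 {Cast} {Γ : List GType} {A B : GType}
    (M : Tm Cast (B :: Γ) A) (N : Tm Cast Γ B) : Tm Cast Γ A :=
  M.subst (substZero N)

/-- Terms of the space-efficient calculus `SC(λS)`. -/
abbrev STm : List GType → GType → Type := Tm SCo

/-- Inert λS coercions: function cross coercions, injections, and failures. -/
inductive SInert : ∀ {A B : GType}, SCo A B → Prop
  | arr {A B C D : GType} {c : SCo C A} {d : SCo B D} : SInert (.mid (.gnd (.arr c d)))
  | inj {A G : GType} {g : GCo A G} {gr : Ground G} : SInert (.mid (.inj g gr))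
  | fail {A B : GType} {ℓ : Label} : SInert (.mid (.fail A B ℓ))

mutual
/-- Simple values: values not wrapped in a cast. -/
inductive SSimple : ∀ {Γ : List GType} {A : GType}, STm Γ A → Prop
  | lam {Γ A B} {N : STm (A :: Γ) B} : SSimple (.lam N)
  | const {Γ A} {p : Prim A} {k : p.rep} : SSimple (.const (Γ := Γ) p k)
  | pair {Γ A B} {M : STm Γ A} {N : STm Γ B} :
      SValue M → SValue N → SSimple (.cons M N)
  | inl {Γ A B} {M : STm Γ A} : SValue M → SSimple (.inl (Γ := Γ) B M)
  | inr {Γ A B} {M : STm Γ B} : SValue M → SSimple (.inr (Γ := Γ) A M)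

/-- Values: simple values, possibly wrapped in (at most) one inert cast. -/
inductive SValue : ∀ {Γ : List GType} {A : GType}, STm Γ A → Prop
  | simp {Γ A} {M : STm Γ A} : SSimple M → SValue M
  | cast {Γ A B} {M : STm Γ A} {c : SCo A B} :
      SSimple M → SInert c → SValue (.cast M c)
end

/-- Evaluation frames of `SC(λS)` (note: there is no frame for casts). -/
inductive SFrame (Γ : List GType) : GType → GType → Type
  | appL {A B} (M : STm Γ A) : SFrame Γ (.arr A B) B
  | appR {A B} (L : STm Γ (.arr A B)) (h : SValue L) : SFrame Γ A B
  | ite {A} (M N : STm Γ A) : SFrame Γ (.base .bool) A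
  | consR {A B} (M : STm Γ A) (h : SValue M) : SFrame Γ B (.prod A B)
  | consL {A B} (N : STm Γ B) : SFrame Γ A (.prod A B)
  | fst {A B} : SFrame Γ (.prod A B) A
  | snd {A B} : SFrame Γ (.prod A B) B
  | inl {A} (B : GType) : SFrame Γ A (.sum A B)
  | inr {B} (A : GType) : SFrame Γ B (.sum A B)
  | case {A B C} (M : STm Γ (.arr A C)) (N : STm Γ (.arr B C)) : SFrame Γ (.sum A B) C

def plugS {Γ : List GType} {A B : GType} : STm Γ A → SFrame Γ A B → STm Γ B
  | M, .appL N => .app M N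
  | M, .appR L _ => .app L M
  | M, .ite M₁ N₁ => .ite M M₁ N₁
  | M, .consR M₁ _ => .cons M₁ M
  | M, .consL N => .cons M N
  | M, .fst => .fst M
  | M, .snd => .snd M
  | M, .inl B => .inl B M
  | M, .inr A => .inr A M
  | M, .case M₁ N₁ => .case M M₁ N₁

/-- Reduction contexts: whether a rule may fire in any context or only in
non-cast contexts. -/
inductive RCtx | any | noncast

/-- Reduction for the space-efficient calculus `SC(λS)`. -/
inductive SRed : RCtx → ∀ {Γ : List GType} {A : GType}, STm Γ A → STm Γ A → Prop
  -- congruence rules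
  | xi {ctx Γ A B} {M M' : STm Γ A} (F : SFrame Γ A B) :
      SRed ctx M M' → SRed .any (plugS M F) (plugS M' F)
  | xiCast {Γ A B} {M M' : STm Γ A} {c : SCo A B} :
      SRed .any M M' → SRed .noncast (.cast M c) (.cast M' c)
  | xiBlame {Γ A B} (F : SFrame Γ A B) (ℓ : Label) :
      SRed .any (plugS (.blame A ℓ) F) (.blame B ℓ)
  | xiCastBlame {Γ A B} {c : SCo A B} {ℓ : Label} :
      SRed .noncast (Γ := Γ) (.cast (.blame A ℓ) c) (.blame B ℓ)
  -- applyCast on simple values, for the active λS coercions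
  | castIdUnk {Γ} {S : STm Γ .unk} : SSimple S → SRed .noncast (.cast S .id) S
  | castIdBase {Γ b} {S : STm Γ (.base b)} : SSimple S →
      SRed .noncast (.cast S (.mid (.gnd (.id b)))) S
  | castFail {Γ A B ℓ} {S : STm Γ A} : SSimple S →
      SRed .noncast (.cast S (.mid (.fail A B ℓ))) (.blame B ℓ)
  | castPair {Γ A B C D} {V₁ : STm Γ A} {V₂ : STm Γ B} {c : SCo A C} {d : SCo B D} :
      SValue V₁ → SValue V₂ →
      SRed .noncast (.cast (.cons V₁ V₂) (.mid (.gnd (.prod c d))))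
                    (.cons (.cast V₁ c) (.cast V₂ d))
  | castInl {Γ A B C D} {V : STm Γ A} {c : SCo A C} {d : SCo B D} :
      SValue V →
      SRed .noncast (.cast (.inl B V) (.mid (.gnd (.sum c d)))) (.inl D (.cast V c))
  | castInr {Γ A B C D} {V : STm Γ B} {c : SCo A C} {d : SCo B D} :
      SValue V →
      SRed .noncast (.cast (.inr A V) (.mid (.gnd (.sum c d)))) (.inr C (.cast V d))
  -- composition of adjacent casts
  | compose {Γ A B C} {M : STm Γ A} {c : SCo A B} {d : SCo B C} :
      SRed .noncast (.cast (.cast M c) d) (.cast M (comp c d))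
  -- elimination of values wrapped in cross casts
  | funCast {Γ A B C D} {V : STm Γ (.arr A B)} {W : STm Γ C}
      {c : SCo C A} {d : SCo B D} : SValue V → SValue W →
      SRed .any (.app (.cast V (.mid (.gnd (.arr c d)))) W)
                (.cast (.app V (.cast W c)) d)
  | fstCast {Γ A B C D} {V : STm Γ (.prod A B)} {c : SCo A C} {d : SCo B D} :
      SValue V →
      SRed .any (.fst (.cast V (.mid (.gnd (.prod c d))))) (.cast (.fst V) c)
  | sndCast {Γ A B C D} {V : STm Γ (.prod A B)} {c : SCo A C} {d : SCo B D} :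
      SValue V →
      SRed .any (.snd (.cast V (.mid (.gnd (.prod c d))))) (.cast (.snd V) d)
  | caseCast {Γ A B C D E} {V : STm Γ (.sum A B)} {c : SCo A C} {d : SCo B D}
      {W₁ : STm Γ (.arr C E)} {W₂ : STm Γ (.arr D E)} : SValue V →
      SRed .any (.case (.cast V (.mid (.gnd (.sum c d)))) W₁ W₂)
        (.case V
          (.lam (.app (W₁.rename (shiftRen A)) (.cast (.var .z) c)))
          (.lam (.app (W₂.rename (shiftRen B)) (.cast (.var .z) d))))
  -- the usual STLC rules
  | beta {Γ A B} {M : STm (A :: Γ) B} {V : STm Γ A} :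
      SValue V → SRed .any (.app (.lam M) V) (M.subst1 V)
  | delta {Γ : List GType} {b A} (p : Prim A) (f : Prim.rep (.fn b p)) (k : Prim.rep (.base b)) :
      SRed .any (Γ := Γ) (.app (.const (.fn b p) f) (.const (.base b) k)) (.const p (f k))
  | ifTrue {Γ A} {M N : STm Γ A} : SRed .any (.ite (.const (.base .bool) true) M N) M
  | ifFalse {Γ A} {M N : STm Γ A} : SRed .any (.ite (.const (.base .bool) false) M N) N
  | betaFst {Γ A B} {V : STm Γ A} {W : STm Γ B} :
      SValue V → SValue W → SRed .any (.fst (.cons V W)) V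
  | betaSnd {Γ A B} {V : STm Γ A} {W : STm Γ B} :
      SValue V → SValue W → SRed .any (.snd (.cons V W)) W
  | caseL {Γ A B C} {V : STm Γ A} {L : STm Γ (.arr A C)} {M : STm Γ (.arr B C)} :
      SValue V → SRed .any (.case (.inl B V) L M) (.app L V)
  | caseR {Γ A B C} {V : STm Γ B} {L : STm Γ (.arr A C)} {M : STm Γ (.arr B C)} :
      SValue V → SRed .any (.case (.inr A V) L M) (.app M V)

/-- A step in `SC(λS)`, in some reduction context. -/
def SStep {Γ : List GType} {A : GType} (M N : STm Γ A) : Prop := ∃ ctx, SRed ctx M N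

/-- Cast insertion (compilation) from the GTLC into `SC(λS)`. -/
def compileS : ∀ {Γ : List GType} {A : GType}, GTerm Γ A → STm Γ A
  | _, _, .const p k => .const p k
  | _, _, .var x => .var x
  | _, _, .lam _ N => .lam (compileS N)
  | _, _, .app L M ℓ m cn =>
      .app (.cast (compileS L) (coerceS m.consis ℓ)) (.cast (compileS M) (coerceS cn.symm ℓ))
  | _, _, .ite L M N ℓ cb cn =>
      .ite (.cast (compileS L) (coerceS cb ℓ))
           (.cast (compileS M) (coerceS cn.joinL ℓ))
           (.cast (compileS N) (coerceS cn.joinR ℓ))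
  | _, _, .cons M N => .cons (compileS M) (compileS N)
  | _, _, .fst M ℓ m => .fst (.cast (compileS M) (coerceS m.consis ℓ))
  | _, _, .snd M ℓ m => .snd (.cast (compileS M) (coerceS m.consis ℓ))
  | _, _, .inl B M => .inl B (compileS M)
  | _, _, .inr A M => .inr A (compileS M)
  | _, _, .case L M N ℓ ca bc =>
      .case (.cast (compileS L) (coerceS ca ℓ))
            (.lam (.cast (compileS M) (coerceS bc.joinL ℓ)))
            (.lam (.cast (compileS N) (coerceS bc.joinR ℓ)))

/-- The real size of an `SC(λS)` term: one per non-cast node, plus the size of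
the coercion at each cast. -/
def realSize : ∀ {Γ : List GType} {A : GType}, STm Γ A → ℕ
  | _, _, .const _ _ => 1
  | _, _, .var _ => 1
  | _, _, .lam N => 1 + realSize N
  | _, _, .app L M => 1 + realSize L + realSize M
  | _, _, .ite L M N => 1 + realSize L + realSize M + realSize N
  | _, _, .cons M N => 1 + realSize M + realSize N
  | _, _, .fst M => 1 + realSize M
  | _, _, .snd M => 1 + realSize M
  | _, _, .inl _ M => 1 + realSize M
  | _, _, .inr _ M => 1 + realSize M
  | _, _, .case L M N => 1 + realSize L + realSize M + realSize N
  | _, _, .cast M c => sizeS c + realSize M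
  | _, _, .blame _ _ => 1

/-- The ideal size of an `SC(λS)` term: the same node count, with casts free. -/
def idealSize : ∀ {Γ : List GType} {A : GType}, STm Γ A → ℕ
  | _, _, .const _ _ => 1
  | _, _, .var _ => 1
  | _, _, .lam N => 1 + idealSize N
  | _, _, .app L M => 1 + idealSize L + idealSize M
  | _, _, .ite L M N => 1 + idealSize L + idealSize M + idealSize N
  | _, _, .cons M N => 1 + idealSize M + idealSize N
  | _, _, .fst M => 1 + idealSize M
  | _, _, .snd M => 1 + idealSize M
  | _, _, .inl _ M => 1 + idealSize M
  | _, _, .inr _ M => 1 + idealSize M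
  | _, _, .case L M N => 1 + idealSize L + idealSize M + idealSize N
  | _, _, .cast M _ => idealSize M
  | _, _, .blame _ _ => 1

/-! ### Heights and sizes of coercions -/

mutual
theorem heightS_comp : ∀ {A B C : GType} (c : SCo A B) (d : SCo B C),
    heightS (comp c d) ≤ max (heightS c) (heightS d)
  | _, _, _, .id, d => by simp only [comp]; exact le_max_right _ _
  | _, _, _, .proj H g ℓ i, d => by
      simp only [comp, heightS]; exact heightI_compI i d
  | _, _, _, .mid i, d => by
      simp only [comp, heightS]; exact heightI_compI i d
termination_by _ _ _ c d => wS c + wS d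
decreasing_by all_goals (simp only [wS, wI, wG]; omega)

theorem heightI_compI : ∀ {A B C : GType} (i : ICo A B) (d : SCo B C),
    heightI (compI i d) ≤ max (heightI i) (heightS d)
  | _, _, _, .fail A B ℓ, _ => by simp only [compI, heightI]; omega
  | _, _, _, .inj g gr, .id => by simp only [compI, heightI]; omega
  | _, _, _, .inj g gr, .proj _ hr ℓ i => by
      simp only [compI, heightI, heightS]; exact heightI_compInjProj g gr hr ℓ i
  | _, _, _, .inj _ _, .mid i' =>
      match i' with
      | .fail _ _ ℓ => by simp only [compI, heightI]; omega
      | .inj g' _ => nomatch g'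
      | .gnd g' => nomatch g'
  | _, _, _, .gnd g, .mid i' => by
      simp only [compI, heightI, heightS]; exact heightI_compGI g i'
  | _, _, _, .gnd g, .id => nomatch g
  | _, _, _, .gnd g, .proj _ _ _ _ => nomatch g
termination_by _ _ _ i d => wI i + wS d
decreasing_by all_goals (simp only [wS, wI, wG]; omega)

theorem heightI_compInjProj : ∀ {A G H C : GType} (g : GCo A G) (gr : Ground G)
    (hr : Ground H) (ℓ : Label) (i : ICo H C),
    heightI (compInjProj g gr hr ℓ i) ≤ max (heightG g) (heightI i)
  | _, G, H, _, g, gr, hr, ℓ, i => by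
      have key (h : G = H) := heightI_compGI (h ▸ g) i
      by_cases h : G = H
      · have hk := key h
        subst h
        simpa only [compInjProj, dite_true] using hk
      · simp only [compInjProj, h, dite_false, heightI]; omega
termination_by A G H C g _ _ _ i => wG g + wI i + 1
decreasing_by subst h; simp only []; omega

theorem heightI_compGI : ∀ {A B C : GType} (g : GCo A B) (i : ICo B C),
    heightI (compGI g i) ≤ max (heightG g) (heightI i)
  | _, _, _, g, .inj h hr => by
      simp only [compGI, heightI]; exact heightG_compG g h
  | _, _, _, g, .gnd h => by
      simp only [compGI, heightI]; exact heightG_compG g h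
  | _, _, _, _, .fail _ _ ℓ => by simp only [compGI, heightI]; omega
termination_by _ _ _ g i => wG g + wI i
decreasing_by all_goals (simp only [wS, wI, wG]; omega)

theorem heightG_compG : ∀ {A B C : GType} (g : GCo A B) (h : GCo B C),
    heightG (compG g h) ≤ max (heightG g) (heightG h)
  | _, _, _, .id b, .id _ => by simp only [compG, heightG]; omega
  | _, _, _, .arr c₁ d₁, .arr c₂ d₂ => by
      have h₁ := heightS_comp c₂ c₁
      have h₂ := heightS_comp d₁ d₂
      simp only [compG, heightG]; omega
  | _, _, _, .prod c₁ d₁, .prod c₂ d₂ => by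
      have h₁ := heightS_comp c₁ c₂
      have h₂ := heightS_comp d₁ d₂
      simp only [compG, heightG]; omega
  | _, _, _, .sum c₁ d₁, .sum c₂ d₂ => by
      have h₁ := heightS_comp c₁ c₂
      have h₂ := heightS_comp d₁ d₂
      simp only [compG, heightG]; omega
termination_by _ _ _ g h => wG g + wG h
decreasing_by all_goals (simp only [wS, wI, wG]; omega)
end

/-- The arithmetic step shared by the three cross coercions in `sizeG_add_le`. -/
theorem cross_size_le {p q a b : ℕ} (ha : a + 5 ≤ 9 * 2 ^ p) (hb : b + 5 ≤ 9 * 2 ^ q) :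
    1 + a + b + 9 ≤ 9 * 2 ^ (1 + max p q) := by
  have h₁ : 2 ^ p ≤ 2 ^ max p q := Nat.pow_le_pow_right (by norm_num) (le_max_left p q)
  have h₂ : 2 ^ q ≤ 2 ^ max p q := Nat.pow_le_pow_right (by norm_num) (le_max_right p q)
  rw [pow_add]
  omega

mutual
/-- The size of a coercion is exponentially bounded in its height. The offsets `5`, `7`, `9` in
this family of lemmas absorb the cost `2` of a projection and the cost `2` of an injection. -/
theorem sizeS_add_le : ∀ {A B : GType} (c : SCo A B), sizeS c + 5 ≤ 9 * 2 ^ heightS c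
  | _, _, .id => by simp [sizeS, heightS]
  | _, _, .proj _ _ _ i => by
      have := sizeI_add_le i
      simp only [sizeS, heightS]; omega
  | _, _, .mid i => by
      have := sizeI_add_le i
      simp only [sizeS, heightS]; omega
theorem sizeI_add_le : ∀ {A B : GType} (i : ICo A B), sizeI i + 7 ≤ 9 * 2 ^ heightI i
  | _, _, .inj g _ => by
      have := sizeG_add_le g
      simp only [sizeI, heightI]; omega
  | _, _, .gnd g => by
      have := sizeG_add_le g
      simp only [sizeI, heightI]; omega
  | _, _, .fail _ _ _ => by simp [sizeI, heightI]
theorem sizeG_add_le : ∀ {A B : GType} (g : GCo A B), sizeG g + 9 ≤ 9 * 2 ^ heightG g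
  | _, _, .id _ => by simp [sizeG, heightG]
  | _, _, .arr c d => by
      simp only [sizeG, heightG]; exact cross_size_le (sizeS_add_le c) (sizeS_add_le d)
  | _, _, .prod c d => by
      simp only [sizeG, heightG]; exact cross_size_le (sizeS_add_le c) (sizeS_add_le d)
  | _, _, .sum c d => by
      simp only [sizeG, heightG]; exact cross_size_le (sizeS_add_le c) (sizeS_add_le d)
end

/-! ### The invariant on cast chains -/

/-- Length of the chain of adjacent casts at the root of a term, where a variable under the chain
counts as one further cast. Since a value is never a variable and carries at most one cast,
substituting values for variables does not increase this number. -/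
def chain : ∀ {Γ : List GType} {A : GType}, STm Γ A → ℕ
  | _, _, .var _ => 1
  | _, _, .cast M _ => chain M + 1
  | _, _, .const _ _ => 0
  | _, _, .lam _ => 0
  | _, _, .app _ _ => 0
  | _, _, .ite _ _ _ => 0
  | _, _, .cons _ _ => 0
  | _, _, .fst _ => 0
  | _, _, .snd _ => 0
  | _, _, .inl _ _ => 0
  | _, _, .inr _ _ => 0
  | _, _, .case _ _ _ => 0
  | _, _, .blame _ _ => 0

/-- `Good h n M`: every coercion in `M` has height at most `h`, and every cast chain has length
(in the sense of `chain`) at most `2` in the positions that are not yet evaluated (bodies of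
abstractions and branches of `ite` and `case`) and at most `n` elsewhere. -/
def Good (h : ℕ) : ∀ {Γ : List GType} {A : GType}, ℕ → STm Γ A → Prop
  | _, _, _, .var _ => True
  | _, _, n, .cast M c => heightS c ≤ h ∧ chain M + 1 ≤ n ∧ Good h n M
  | _, _, _, .const _ _ => True
  | _, _, _, .lam N => Good h 2 N
  | _, _, n, .app L M => Good h n L ∧ Good h n M
  | _, _, n, .ite L M N => Good h n L ∧ Good h 2 M ∧ Good h 2 N
  | _, _, n, .cons M N => Good h n M ∧ Good h n N
  | _, _, n, .fst M => Good h n M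
  | _, _, n, .snd M => Good h n M
  | _, _, n, .inl _ M => Good h n M
  | _, _, n, .inr _ M => Good h n M
  | _, _, n, .case L M N => Good h n L ∧ Good h 2 M ∧ Good h 2 N
  | _, _, _, .blame _ _ => True

theorem Good.mono {h h' n n' : ℕ} (hh : h ≤ h') (hn : n ≤ n') {Γ : List GType} {A : GType}
    {M : STm Γ A} (g : Good h n M) : Good h' n' M := by
  induction M generalizing n n' with
  | const | var | blame => trivial
  | lam N ih => exact ih le_rfl g
  | app L M ihL ihM => exact ⟨ihL hn g.1, ihM hn g.2⟩
  | cons L M ihL ihM => exact ⟨ihL hn g.1, ihM hn g.2⟩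
  | ite L M N ihL ihM ihN => exact ⟨ihL hn g.1, ihM le_rfl g.2.1, ihN le_rfl g.2.2⟩
  | case L M N ihL ihM ihN => exact ⟨ihL hn g.1, ihM le_rfl g.2.1, ihN le_rfl g.2.2⟩
  | fst M ih | snd M ih | inl B M ih | inr B M ih => exact ih hn g
  | cast M c ih => exact ⟨g.1.trans hh, g.2.1.trans hn, ih hn g.2.2⟩

theorem chain_le_two {h : ℕ} {Γ : List GType} {A : GType} {M : STm Γ A} (g : Good h 2 M) :
    chain M ≤ 2 := by
  cases M <;> first | exact g.2.1 | simp [chain]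

theorem chain_rename {Γ Δ : List GType} {A : GType} (ρ : Ren Γ Δ) (M : STm Γ A) :
    chain (M.rename ρ) = chain M := by
  induction M generalizing Δ <;> simp_all [Tm.rename, chain]

theorem Good.rename {h n : ℕ} {Γ Δ : List GType} {A : GType} (ρ : Ren Γ Δ) {M : STm Γ A}
    (g : Good h n M) : Good h n (M.rename ρ) := by
  induction M generalizing n Δ <;> simp_all [Tm.rename, Good, chain_rename]

/-- The substitutions that preserve `Good`. -/
def GoodSubst (h : ℕ) {Γ Δ : List GType} (σ : Subst SCo Γ Δ) : Prop :=
  ∀ (A : GType) (x : GVar Γ A), chain (σ A x) ≤ 1 ∧ Good h 2 (σ A x)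

theorem GoodSubst.exts {h : ℕ} {Γ Δ : List GType} {σ : Subst SCo Γ Δ} (hσ : GoodSubst h σ)
    (B : GType) : GoodSubst h (σ.exts B) := by
  intro A x
  cases x with
  | z => exact ⟨le_rfl, trivial⟩
  | s y => exact ⟨(chain_rename _ _).trans_le (hσ A y).1, (hσ A y).2.rename _⟩

theorem chain_subst {h : ℕ} {Γ Δ : List GType} {A : GType} {σ : Subst SCo Γ Δ}
    (hσ : GoodSubst h σ) (M : STm Γ A) : chain (M.subst σ) ≤ chain M := by
  induction M generalizing Δ with
  | var x => exact (hσ _ x).1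
  | cast M c ih => exact Nat.succ_le_succ (ih hσ)
  | _ => exact le_rfl

theorem Good.subst {h n : ℕ} (hn : 2 ≤ n) {Γ Δ : List GType} {A : GType} {σ : Subst SCo Γ Δ}
    (hσ : GoodSubst h σ) {M : STm Γ A} (g : Good h n M) : Good h n (M.subst σ) := by
  induction M generalizing n Δ with
  | const | blame => trivial
  | var x => exact (hσ _ x).2.mono le_rfl hn
  | lam N ih => exact ih le_rfl (hσ.exts _) g
  | app L M ihL ihM => exact ⟨ihL hn hσ g.1, ihM hn hσ g.2⟩
  | cons L M ihL ihM => exact ⟨ihL hn hσ g.1, ihM hn hσ g.2⟩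
  | ite L M N ihL ihM ihN =>
      exact ⟨ihL hn hσ g.1, ihM le_rfl hσ g.2.1, ihN le_rfl hσ g.2.2⟩
  | case L M N ihL ihM ihN =>
      exact ⟨ihL hn hσ g.1, ihM le_rfl hσ g.2.1, ihN le_rfl hσ g.2.2⟩
  | fst M ih | snd M ih | inl B M ih | inr B M ih => exact ih hn hσ g
  | cast M c ih =>
      exact ⟨g.1, (Nat.succ_le_succ (chain_subst hσ M)).trans g.2.1, ih hn hσ g.2.2⟩

theorem chain_simple {Γ : List GType} {A : GType} {M : STm Γ A} (s : SSimple M) :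
    chain M = 0 := by
  cases s <;> rfl

theorem chain_value {Γ : List GType} {A : GType} {M : STm Γ A} (v : SValue M) :
    chain M ≤ 1 := by
  cases v with
  | simp s => rw [chain_simple s]; exact Nat.zero_le 1
  | cast s _ => rw [chain, chain_simple s]

/-- Evaluation leaves no long cast chains in a value, so a value may be substituted into
positions that are not yet evaluated. -/
theorem Good.value {h n : ℕ} {Γ : List GType} {A : GType} {M : STm Γ A} (v : SValue M)
    (g : Good h n M) : Good h 2 M := by
  induction M with
  | const | var | blame => trivial
  | lam N ih => exact g
  | cons M N ihM ihN =>
      cases v with | simp s => cases s with | pair v w => exact ⟨ihM v g.1, ihN w g.2⟩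
  | inl B M ih => cases v with | simp s => cases s with | inl v => exact ih v g
  | inr B M ih => cases v with | simp s => cases s with | inr v => exact ih v g
  | cast M c ih =>
      cases v with
      | simp s => cases s
      | cast s _ =>
          exact ⟨g.1, by rw [chain_simple s]; norm_num, ih (.simp s) g.2.2⟩
  | _ => cases v with | simp s => cases s

theorem goodSubst_substZero {h n : ℕ} {Γ : List GType} {A : GType} {V : STm Γ A}
    (v : SValue V) (g : Good h n V) : GoodSubst h (substZero V) := by
  intro B x
  cases x with
  | z => exact ⟨chain_value v, g.value v⟩
  | s y => exact ⟨le_rfl, trivial⟩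

/-! ### Preservation of the invariant -/

theorem chain_plugS {Γ : List GType} {A B : GType} (M : STm Γ A) (F : SFrame Γ A B) :
    chain (plugS M F) = 0 := by
  cases F <;> rfl

theorem Good.plugS_congr {h : ℕ} {Γ : List GType} {A B : GType} {M M' : STm Γ A}
    (F : SFrame Γ A B) (g : Good h 3 (plugS M F)) (hM : Good h 3 M → Good h 3 M') :
    Good h 3 (plugS M' F) := by
  cases F with
  | appL | ite | consL | case => exact ⟨hM g.1, g.2⟩
  | appR | consR => exact ⟨g.1, hM g.2⟩
  | fst | snd | inl | inr => exact hM g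

/-- Preservation under one step. A step that may fire beneath a cast (context `any`) yields a
root chain of length at most `2`, which leaves room for that surrounding cast. -/
theorem Good.step {h : ℕ} {ctx : RCtx} {Γ : List GType} {A : GType} {M M' : STm Γ A}
    (r : SRed ctx M M') (g : Good h 3 M) :
    Good h 3 M' ∧ (ctx = .any → chain M' ≤ 2) := by
  induction r with
  | xi F _ ih =>
      exact ⟨g.plugS_congr F fun g' => (ih g').1, fun _ => by rw [chain_plugS]; omega⟩
  | xiCast _ ih =>
      obtain ⟨g', hc⟩ := ih g.2.2
      exact ⟨⟨g.1, Nat.succ_le_succ (hc rfl), g'⟩, nofun⟩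
  | xiBlame | xiCastBlame | castFail => exact ⟨trivial, fun _ => Nat.zero_le 2⟩
  | castIdUnk | castIdBase => exact ⟨g.2.2, nofun⟩
  | castPair v w =>
      obtain ⟨hc, -, g₁, g₂⟩ := g
      have hv := chain_value v
      have hw := chain_value w
      simp only [heightS, heightI, heightG] at hc
      exact ⟨⟨⟨by omega, by omega, g₁⟩, ⟨by omega, by omega, g₂⟩⟩, nofun⟩
  | castInl v =>
      obtain ⟨hc, -, g₁⟩ := g
      have hv := chain_value v
      simp only [heightS, heightI, heightG] at hc
      exact ⟨⟨by omega, by omega, g₁⟩, nofun⟩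
  | castInr v =>
      obtain ⟨hc, -, g₁⟩ := g
      have hv := chain_value v
      simp only [heightS, heightI, heightG] at hc
      exact ⟨⟨by omega, by omega, g₁⟩, nofun⟩
  | @compose _ _ _ _ M c d =>
      obtain ⟨hd, -, hc, hM, g⟩ := g
      exact ⟨⟨(heightS_comp c d).trans (max_le hc hd), hM, g⟩, nofun⟩
  | funCast v w =>
      obtain ⟨⟨hc, -, gV⟩, gW⟩ := g
      have hw := chain_value w
      simp only [heightS, heightI, heightG] at hc
      exact ⟨⟨by omega, by simp [chain], gV, by omega, by omega, gW⟩, fun _ => by simp [chain]⟩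
  | fstCast v =>
      obtain ⟨hc, -, gV⟩ := g
      simp only [heightS, heightI, heightG] at hc
      exact ⟨⟨by omega, by simp [chain], gV⟩, fun _ => by simp [chain]⟩
  | sndCast v =>
      obtain ⟨hc, -, gV⟩ := g
      simp only [heightS, heightI, heightG] at hc
      exact ⟨⟨by omega, by simp [chain], gV⟩, fun _ => by simp [chain]⟩
  | caseCast v =>
      obtain ⟨⟨hc, -, gV⟩, g₁, g₂⟩ := g
      simp only [heightS, heightI, heightG] at hc
      exact ⟨⟨gV, ⟨g₁.rename _, by omega, le_rfl, trivial⟩,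
        ⟨g₂.rename _, by omega, le_rfl, trivial⟩⟩, fun _ => Nat.zero_le 2⟩
  | beta v =>
      have gM := Good.subst le_rfl (goodSubst_substZero v g.2) g.1
      exact ⟨gM.mono le_rfl (by norm_num), fun _ => chain_le_two gM⟩
  | delta => exact ⟨trivial, fun _ => Nat.zero_le 2⟩
  | ifTrue => exact ⟨g.2.1.mono le_rfl (by norm_num), fun _ => chain_le_two g.2.1⟩
  | ifFalse => exact ⟨g.2.2.mono le_rfl (by norm_num), fun _ => chain_le_two g.2.2⟩
  | betaFst v w => exact ⟨g.1, fun _ => (chain_value v).trans one_le_two⟩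
  | betaSnd v w => exact ⟨g.2, fun _ => (chain_value w).trans one_le_two⟩
  | caseL v => exact ⟨⟨g.2.1.mono le_rfl (by norm_num), g.1⟩, fun _ => Nat.zero_le 2⟩
  | caseR v => exact ⟨⟨g.2.2.mono le_rfl (by norm_num), g.1⟩, fun _ => Nat.zero_le 2⟩

/-! ### Compiled terms and the size bound -/

/-- A compiled term is never a cast at its root, so `chain` is `1` for variables and `0` otherwise;
hence cast insertion creates no adjacent casts. -/
theorem chain_compileS {Γ : List GType} {A : GType} (M : GTerm Γ A) :
    chain (compileS M) ≤ 1 := by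
  cases M <;> simp [compileS, chain]

theorem exists_good_compileS {Γ : List GType} {A : GType} (M : GTerm Γ A) :
    ∃ h, Good h 2 (compileS M) := by
  have key : ∀ {Γ : List GType} {A B : GType} (N : GTerm Γ A) (c : SCo A B) {h h' : ℕ},
      Good h 2 (compileS N) → h ≤ h' → heightS c ≤ h' → Good h' 2 (.cast (compileS N) c) :=
    fun N c _ _ g hh hc =>
      ⟨hc, Nat.succ_le_succ (chain_compileS N), g.mono hh le_rfl⟩
  induction M with
  | const | var => exact ⟨0, trivial⟩
  | lam A N ih | inl B N ih | inr B N ih => exact ih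
  | cons M N ihM ihN =>
      obtain ⟨h₁, g₁⟩ := ihM
      obtain ⟨h₂, g₂⟩ := ihN
      exact ⟨max h₁ h₂, g₁.mono (le_max_left _ _) le_rfl, g₂.mono (le_max_right _ _) le_rfl⟩
  | app L M ℓ m cn ihL ihM =>
      obtain ⟨h₁, g₁⟩ := ihL
      obtain ⟨h₂, g₂⟩ := ihM
      exact ⟨h₁ + h₂ + heightS (coerceS m.consis ℓ) + heightS (coerceS cn.symm ℓ),
        key L _ g₁ (by omega) (by omega), key M _ g₂ (by omega) (by omega)⟩
  | fst M ℓ m ih | snd M ℓ m ih =>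
      obtain ⟨h, g⟩ := ih
      exact ⟨h + heightS (coerceS m.consis ℓ), key M _ g (by omega) (by omega)⟩
  | ite L M N ℓ cb cn ihL ihM ihN =>
      obtain ⟨h₁, g₁⟩ := ihL
      obtain ⟨h₂, g₂⟩ := ihM
      obtain ⟨h₃, g₃⟩ := ihN
      exact ⟨h₁ + h₂ + h₃ + heightS (coerceS cb ℓ) + heightS (coerceS cn.joinL ℓ)
          + heightS (coerceS cn.joinR ℓ),
        key L _ g₁ (by omega) (by omega), key M _ g₂ (by omega) (by omega),
        key N _ g₃ (by omega) (by omega)⟩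
  | case L M N ℓ ca bc ihL ihM ihN =>
      obtain ⟨h₁, g₁⟩ := ihL
      obtain ⟨h₂, g₂⟩ := ihM
      obtain ⟨h₃, g₃⟩ := ihN
      exact ⟨h₁ + h₂ + h₃ + heightS (coerceS ca ℓ) + heightS (coerceS bc.joinL ℓ)
          + heightS (coerceS bc.joinR ℓ),
        key L _ g₁ (by omega) (by omega), key M _ g₂ (by omega) (by omega),
        key N _ g₃ (by omega) (by omega)⟩

theorem chain_le_three {h n : ℕ} (hn : n ≤ 3) {Γ : List GType} {A : GType} {M : STm Γ A}
    (g : Good h n M) : chain M ≤ 3 := by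
  cases M <;> first | exact g.2.1.trans hn | simp [chain]

/-- The size bound for `Good` terms. Each non-cast node pays in advance for a chain of three casts
above it; the summand `chain M * s` on the right is the part of this budget already spent. -/
theorem realSize_add_le {h n s : ℕ} (hn : n ≤ 3)
    (hs : ∀ {A B : GType} (c : SCo A B), heightS c ≤ h → sizeS c ≤ s)
    {Γ : List GType} {A : GType} {M : STm Γ A} (g : Good h n M) :
    realSize M + 3 * s ≤ (1 + 3 * s) * idealSize M + chain M * s := by
  have drop : ∀ {n : ℕ} {Γ : List GType} {A : GType} {M : STm Γ A}, n ≤ 3 → Good h n M →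
      realSize M + 3 * s ≤ (1 + 3 * s) * idealSize M + chain M * s →
      realSize M ≤ (1 + 3 * s) * idealSize M := by
    intro n Γ A M hn g hM
    have := Nat.mul_le_mul_right s (chain_le_three hn g)
    omega
  have two : 2 ≤ 3 := by norm_num
  induction M generalizing n with
  | const | var | blame => simp only [realSize, idealSize]; omega
  | lam N ih =>
      have h₁ := drop two g (ih two g)
      simp only [realSize, idealSize, mul_add]; omega
  | fst M ih | snd M ih | inl B M ih | inr B M ih =>
      have h₁ := drop (M := M) hn g (ih hn g)
      simp only [realSize, idealSize, mul_add]; omega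
  | app L M ihL ihM | cons L M ihL ihM =>
      have h₁ := drop hn g.1 (ihL hn g.1)
      have h₂ := drop hn g.2 (ihM hn g.2)
      simp only [realSize, idealSize, mul_add]; omega
  | ite L M N ihL ihM ihN | case L M N ihL ihM ihN =>
      have h₁ := drop hn g.1 (ihL hn g.1)
      have h₂ := drop two g.2.1 (ihM two g.2.1)
      have h₃ := drop two g.2.2 (ihN two g.2.2)
      simp only [realSize, idealSize, mul_add]; omega
  | cast M c ih =>
      have h₁ := ih hn g.2.2
      have h₂ := hs c g.1
      simp only [realSize, idealSize, chain, add_mul]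
      simp only [add_mul] at h₁
      omega

/-- Corollary 7.11 (Space Consumption for λS): for any well-typed GTLC term `M`
there is a constant `k` bounding, along any reduction sequence from the
compilation of `M`, the real size of the reduct by `k` times its ideal size. -/
theorem space_consumption {Γ : List GType} {A : GType} (M : GTerm Γ A) :
    ∃ k : ℕ, ∀ M' : STm Γ A,
      Relation.ReflTransGen SStep (compileS M) M' →
      realSize M' ≤ k * idealSize M' := by
  obtain ⟨h, g₀⟩ := exists_good_compileS M
  refine ⟨1 + 3 * (9 * 2 ^ h), fun M' hM' => ?_⟩
  have g : Good h 3 M' := by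
    induction hM' with
    | refl => exact g₀.mono le_rfl (by norm_num)
    | tail _ st ih =>
        obtain ⟨ctx, r⟩ := st
        exact (ih.step r).1
  have hs : ∀ {A B : GType} (c : SCo A B), heightS c ≤ h → sizeS c ≤ 9 * 2 ^ h := by
    intro A B c hc
    have h₁ := sizeS_add_le c
    have h₂ : 2 ^ heightS c ≤ 2 ^ h := Nat.pow_le_pow_right (by norm_num) hc
    omega
  have h₁ := realSize_add_le le_rfl hs g
  have h₂ := Nat.mul_le_mul_right (9 * 2 ^ h) (chain_le_three le_rfl g)
  omega
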